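/- arXiv:1106.4822 — 3 statements merged into one kernel-verified Lean document; each statement's English description precedes it below -/
import Mathlib

section
/- Under the LCC setup, for every m, every j ≥ 1 and every bounded linear operator L : X_m → X_m one has w_{m+j}(L) ≤ w_{m+j+1}(L); that is, the sequence j ↦ w_{m+j}(L) is nondecreasing. -/
/-!
If `J : Z → W` and `R : W → Z` are contractions with `R ∘ J = id`, then a norming pair `(x, f)` of
`Z` is carried to the norming pair `(J x, f ∘ R)` of `W`, so `ν(R ∘ S ∘ J) ≤ ν(S)` for every
operator `S` on `W`. Take `Z = X_{m+j}`, `W = X_{m+j+1}`, `J` the inclusion and `R = P_{m+j}`: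
compressing the operator behind `w_{m+j+1}(L)` gives back the operator behind `w_{m+j}(L)`.
-/

open Filter Topology

variable {X : Type*} [NormedAddCommGroup X] [NormedSpace ℝ X]

/-- The numerical radius of a bounded linear operator on a real normed space. -/
noncomputable def nu {Z : Type*} [NormedAddCommGroup Z] [NormedSpace ℝ Z] (T : Z →L[ℝ] Z) : ℝ :=
  sSup {r : ℝ | ∃ (x : Z) (f : Z →L[ℝ] ℝ), ‖x‖ = 1 ∧ ‖f‖ = 1 ∧ f x = 1 ∧ r = |f (T x)|}

/-- The numerical index of a real normed space. -/
noncomputable def nIndex (Z : Type*) [NormedAddCommGroup Z] [NormedSpace ℝ Z] : ℝ :=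
  sInf {r : ℝ | ∃ T : Z →L[ℝ] Z, ‖T‖ = 1 ∧ r = nu T}

/-- The (continuous) inclusion map between nested submodules. -/
noncomputable def incl {p q : Submodule ℝ X} (h : p ≤ q) : p →L[ℝ] q :=
  (Submodule.inclusion h).mkContinuous 1 (fun x => by rw [one_mul]; exact le_of_eq rfl)

/-- `QQ Xm P m j = Q_{m,j} = P_m ∘ P_{m+1} ∘ ⋯ ∘ P_{m+j-1} : X_{m+j} → X_m`
(with `Q_{m,0} = id`). -/
noncomputable def QQ (Xm : ℕ → Submodule ℝ X) (P : ∀ m, Xm (m + 1) →L[ℝ] Xm m) (m : ℕ) :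
    ∀ j, Xm (m + j) →L[ℝ] Xm m
  | 0 => ContinuousLinearMap.id ℝ (Xm m)
  | (j + 1) => (QQ Xm P m j).comp (P (m + j))

/-- `w Xm hmono P m j L = w_{m+j}(L) = ν(ι ∘ L ∘ Q_{m,j})`, the numerical radius in
`X_{m+j}` of the operator `x ↦ L (Q_{m,j} x)`. -/
noncomputable def w (Xm : ℕ → Submodule ℝ X) (hmono : Monotone Xm)
    (P : ∀ m, Xm (m + 1) →L[ℝ] Xm m) (m j : ℕ) (L : Xm m →L[ℝ] Xm m) : ℝ :=
  nu ((incl (hmono (Nat.le_add_right m j))).comp (L.comp (QQ Xm P m j)))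

/-- The Local Characterization Condition (LCC): for every `m`, every norming functional
`f ∈ X_{m+1}*` of a unit vector `x ∈ X_{m+1}`, some multiple of `f` restricted to `X_m`
is a norming functional for `P_m x` in `X_m*`. -/
def LCC (Xm : ℕ → Submodule ℝ X) (hmono : Monotone Xm)
    (P : ∀ m, Xm (m + 1) →L[ℝ] Xm m) : Prop :=
  ∀ (m : ℕ) (x : Xm (m + 1)) (f : Xm (m + 1) →L[ℝ] ℝ), ‖x‖ = 1 → ‖f‖ = 1 → f x = 1 →
    ∃ b : ℝ, ‖b • f.comp (incl (hmono (Nat.le_succ m)))‖ = 1 ∧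
      b * f (incl (hmono (Nat.le_succ m)) (P m x)) = ‖P m x‖

section NumericalRadius

variable {Z W : Type*} [NormedAddCommGroup Z] [NormedSpace ℝ Z]
  [NormedAddCommGroup W] [NormedSpace ℝ W]

theorem norm_eq_one_of_apply_eq_one {x : Z} {f : Z →L[ℝ] ℝ} (hx : ‖x‖ ≤ 1) (hf : ‖f‖ ≤ 1)
    (hfx : f x = 1) : ‖x‖ = 1 ∧ ‖f‖ = 1 := by
  have one_le_mul : 1 ≤ ‖f‖ * ‖x‖ := by simpa only [hfx, norm_one] using f.le_opNorm x
  constructor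
  · exact hx.antisymm (one_le_mul.trans (mul_le_of_le_one_left (norm_nonneg x) hf))
  · exact hf.antisymm (one_le_mul.trans (mul_le_of_le_one_right (norm_nonneg f) hx))

theorem abs_apply_apply_le_norm (T : Z →L[ℝ] Z) {x : Z} {f : Z →L[ℝ] ℝ} (hx : ‖x‖ ≤ 1)
    (hf : ‖f‖ ≤ 1) : |f (T x)| ≤ ‖T‖ := by
  have norm_T_le : ‖T x‖ ≤ ‖T‖ := T.unit_le_opNorm x hx
  calc |f (T x)| ≤ 1 * ‖T x‖ := f.le_of_opNorm_le hf (T x)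
    _ ≤ ‖T‖ := by rwa [one_mul]

theorem abs_apply_apply_le_nu (T : Z →L[ℝ] Z) {x : Z} {f : Z →L[ℝ] ℝ} (hx : ‖x‖ ≤ 1)
    (hf : ‖f‖ ≤ 1) (hfx : f x = 1) : |f (T x)| ≤ nu T := by
  obtain ⟨norm_x, norm_f⟩ := norm_eq_one_of_apply_eq_one hx hf hfx
  refine le_csSup ⟨‖T‖, ?_⟩ ⟨x, f, norm_x, norm_f, hfx, rfl⟩
  rintro _ ⟨y, g, norm_y, norm_g, -, rfl⟩
  exact abs_apply_apply_le_norm T norm_y.le norm_g.le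

theorem nu_nonneg (T : Z →L[ℝ] Z) : 0 ≤ nu T := by
  refine Real.sSup_nonneg ?_
  rintro _ ⟨x, f, -, -, -, rfl⟩
  exact abs_nonneg _

-- On the zero space, which has no unit vectors, `nu` takes the junk value `sSup ∅ = 0`.
theorem nu_le {T : Z →L[ℝ] Z} {r : ℝ} (hr : 0 ≤ r)
    (h : ∀ (x : Z) (f : Z →L[ℝ] ℝ), ‖x‖ = 1 → ‖f‖ = 1 → f x = 1 → |f (T x)| ≤ r) :
    nu T ≤ r := by
  refine Real.sSup_le ?_ hr
  rintro _ ⟨x, f, norm_x, norm_f, hfx, rfl⟩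
  exact h x f norm_x norm_f hfx

theorem nu_comp_comp_le {J : Z →L[ℝ] W} {R : W →L[ℝ] Z} (hJ : ‖J‖ ≤ 1) (hR : ‖R‖ ≤ 1)
    (hRJ : R.comp J = ContinuousLinearMap.id ℝ Z) (S : W →L[ℝ] W) :
    nu (R.comp (S.comp J)) ≤ nu S := by
  refine nu_le (nu_nonneg S) fun x f norm_x norm_f hfx => ?_
  have norm_Jx : ‖J x‖ ≤ 1 := by
    simpa only [one_mul, norm_x] using J.le_of_opNorm_le hJ x
  have norm_fR : ‖f.comp R‖ ≤ 1 :=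
    (f.opNorm_comp_le R).trans (mul_le_one₀ norm_f.le (norm_nonneg R) hR)
  have fR_Jx : (f.comp R) (J x) = 1 := (congrArg f (DFunLike.congr_fun hRJ x)).trans hfx
  exact abs_apply_apply_le_nu S norm_Jx norm_fR fR_Jx

end NumericalRadius

section Inclusion

variable {p q : Submodule ℝ X}

theorem norm_incl_le_one (h : p ≤ q) : ‖incl h‖ ≤ 1 :=
  LinearMap.mkContinuous_norm_le _ zero_le_one _

theorem comp_incl_eq_id {R : q →L[ℝ] p} (h : p ≤ q)
    (hR : ∀ y : q, (y : X) ∈ p → (R y : X) = y) :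
    R.comp (incl h) = ContinuousLinearMap.id ℝ p :=
  ContinuousLinearMap.ext fun x => Subtype.ext (hR (incl h x) x.2)

end Inclusion

theorem comp_incl_comp_QQ_succ_comp_incl {Xm : ℕ → Submodule ℝ X} (hmono : Monotone Xm)
    {P : ∀ m, Xm (m + 1) →L[ℝ] Xm m} {m j : ℕ}
    (hP : (P (m + j)).comp (incl (hmono (Nat.le_succ (m + j)))) =
      ContinuousLinearMap.id ℝ (Xm (m + j))) (L : Xm m →L[ℝ] Xm m) :
    (P (m + j)).comp (((incl (hmono (Nat.le_add_right m (j + 1)))).comp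
        (L.comp (QQ Xm P m (j + 1)))).comp (incl (hmono (Nat.le_succ (m + j))))) =
      (incl (hmono (Nat.le_add_right m j))).comp (L.comp (QQ Xm P m j)) := by
  have P_incl (y : Xm (m + j)) : P (m + j) (incl (hmono (Nat.le_succ (m + j))) y) = y :=
    DFunLike.congr_fun hP y
  ext1 x
  have QQ_succ_incl :
      QQ Xm P m (j + 1) (incl (hmono (Nat.le_succ (m + j))) x) = QQ Xm P m j x :=
    congrArg (QQ Xm P m j) (P_incl x)
  calc P (m + j) (incl (hmono (Nat.le_add_right m (j + 1)))
        (L (QQ Xm P m (j + 1) (incl (hmono (Nat.le_succ (m + j))) x))))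
      = P (m + j) (incl (hmono (Nat.le_add_right m (j + 1))) (L (QQ Xm P m j x))) := by
        rw [QQ_succ_incl]
    _ = incl (hmono (Nat.le_add_right m j)) (L (QQ Xm P m j x)) :=
        P_incl (incl (hmono (Nat.le_add_right m j)) (L (QQ Xm P m j x)))

theorem stmt9_general (Xm : ℕ → Submodule ℝ X) (hmono : Monotone Xm)
    (P : ∀ m, Xm (m + 1) →L[ℝ] Xm m) (hPnorm : ∀ m, ‖P m‖ ≤ 1)
    (hPid : ∀ (m : ℕ) (y : Xm (m + 1)), (y : X) ∈ Xm m → ((P m y : Xm m) : X) = (y : X))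
    (m : ℕ) (L : Xm m →L[ℝ] Xm m) : Monotone fun j => w Xm hmono P m j L := by
  refine monotone_nat_of_le_succ fun j => ?_
  have step_le : Xm (m + j) ≤ Xm (m + j + 1) := hmono (Nat.le_succ (m + j))
  have P_comp_incl := comp_incl_eq_id step_le (hPid (m + j))
  have compression_le := nu_comp_comp_le (norm_incl_le_one step_le) (hPnorm (m + j)) P_comp_incl
    ((incl (hmono (Nat.le_add_right m (j + 1)))).comp (L.comp (QQ Xm P m (j + 1))))
  rwa [comp_incl_comp_QQ_succ_comp_incl hmono P_comp_incl L] at compression_le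

/-- Under the LCC setup, the sequence `j ↦ w_{m+j}(L)` is nondecreasing for `j ≥ 1`. -/
theorem stmt9 [CompleteSpace X]
    (Xm : ℕ → Submodule ℝ X) (hmono : Monotone Xm)
    (hclosed : ∀ m, IsClosed (Xm m : Set X))
    (hdense : Dense (⋃ m, (Xm m : Set X)))
    (P : ∀ m, Xm (m + 1) →L[ℝ] Xm m)
    (hPnorm : ∀ m, ‖P m‖ = 1)
    (hPid : ∀ (m : ℕ) (y : Xm (m + 1)), (y : X) ∈ Xm m → ((P m y : Xm m) : X) = (y : X)) :
    ∀ (m : ℕ) (j : ℕ), 1 ≤ j → ∀ L : Xm m →L[ℝ] Xm m,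
      w Xm hmono P m j L ≤ w Xm hmono P m (j + 1) L :=
  fun m j _ L =>
    stmt9_general Xm hmono P (fun k => (hPnorm k).le) hPid m L (Nat.le_succ j)
end

section
/- Under the LCC setup, for each m there exists a bounded linear map Q_m : X → X_m with ‖Q_m‖ = 1 which restricts to the identity on X_m, such that for every k and every x ∈ X_k one has Q_{m,j} x = Q_m x for all sufficiently large j; in particular Q_{m,j} x → Q_m x as j → ∞ for every x in the union of the X_n. -/
open Filter Topology

variable {X : Type*} [NormedAddCommGroup X] [NormedSpace ℝ X]

/-!
Since `P_{m+j}` fixes `X_{m+j}`, each `Q_{m,j+1}` extends `Q_{m,j}`. The maps `Q_{m,j}` therefore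
glue to a single contraction on the dense subspace `⋃ X_n`, which extends by continuity to `Q_m`
because `X_m` is complete. The norm of `Q_m` is at least one because `Q_m` extends `P_m`.
-/

section Extension

variable {𝕜 E F : Type*} [NormedField 𝕜] [SeminormedAddCommGroup E] [NormedSpace 𝕜 E]
  [NormedAddCommGroup F] [NormedSpace 𝕜 F] [CompleteSpace F]

theorem exists_clm_extension_of_dense_domain (f : E →ₗ.[𝕜] F) (hdense : Dense (f.domain : Set E))
    {C : ℝ} (hbound : ∀ x, ‖f x‖ ≤ C * ‖x‖) :
    ∃ g : E →L[𝕜] F, (∀ x, ‖g x‖ ≤ C * ‖x‖) ∧ ∀ x : f.domain, g x = f x := by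
  have hrange : DenseRange f.domain.subtype := hdense.denseRange_val
  exact ⟨f.toFun.extendOfNorm f.domain.subtype,
    LinearMap.norm_extendOfNorm_apply_le hrange C hbound,
    LinearMap.extendOfNorm_eq hrange ⟨C, hbound⟩⟩

theorem exists_clm_extension_of_directed {ι : Type*} (f : ι → E →ₗ.[𝕜] F) (hf : Directed (· ≤ ·) f)
    (hdense : Dense (⋃ i, ((f i).domain : Set E)))
    {C : ℝ} (hbound : ∀ i x, ‖f i x‖ ≤ C * ‖x‖) :
    ∃ g : E →L[𝕜] F, (∀ x, ‖g x‖ ≤ C * ‖x‖) ∧ ∀ i (x : (f i).domain), g x = f i x := by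
  obtain ⟨i₀, -⟩ := Set.nonempty_iUnion.1 hdense.nonempty
  have : Nonempty ι := ⟨i₀⟩
  let u := LinearPMap.sSup (Set.range f) hf.directedOn_range
  have le_u (i : ι) : f i ≤ u := LinearPMap.le_sSup _ (Set.mem_range_self i)
  have u_apply (i : ι) (x : (f i).domain) : u ⟨x, (le_u i).1 x.2⟩ = f i x :=
    LinearPMap.sSup_apply _ (Set.mem_range_self i) x
  have hu_dense : Dense (u.domain : Set E) :=
    hdense.mono (Set.iUnion_subset fun i => (le_u i).1)
  have hu_bound (x : u.domain) : ‖u x‖ ≤ C * ‖x‖ := by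
    obtain ⟨-, ⟨i, rfl⟩, hx⟩ :=
      (LinearPMap.mem_domain_sSup_iff (Set.range_nonempty f) hf.directedOn_range).1 x.2
    calc ‖u x‖ = ‖f i ⟨x, hx⟩‖ := congrArg norm (u_apply i ⟨x, hx⟩)
      _ ≤ C * ‖x‖ := hbound i ⟨x, hx⟩
  obtain ⟨g, hg_bound, hg⟩ := exists_clm_extension_of_dense_domain u hu_dense hu_bound
  exact ⟨g, hg_bound, fun i x => (hg _).trans (u_apply i x)⟩

end Extension

section InverseSystem

variable {Xm : ℕ → Submodule ℝ X} {P : ∀ m, Xm (m + 1) →L[ℝ] Xm m}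

theorem norm_QQ_le_one (hP : ∀ m, ‖P m‖ ≤ 1) (m j : ℕ) : ‖QQ Xm P m j‖ ≤ 1 := by
  induction j with
  | zero => exact ContinuousLinearMap.norm_id_le
  | succ j ih =>
    calc ‖(QQ Xm P m j).comp (P (m + j))‖
        ≤ ‖QQ Xm P m j‖ * ‖P (m + j)‖ := ContinuousLinearMap.opNorm_comp_le _ _
      _ ≤ 1 := mul_le_one₀ ih (norm_nonneg (P (m + j))) (hP _)

variable (Xm P) in
/-- `Q_{m,j}` as a partially defined map on `X` with domain `X_{m+j}`, so that compatibility of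
the `Q_{m,j}` for varying `j` is expressed by the extension order on partial maps. -/
noncomputable def partialQQ (m j : ℕ) : X →ₗ.[ℝ] Xm m :=
  ⟨Xm (m + j), (QQ Xm P m j).toLinearMap⟩

theorem monotone_partialQQ (hmono : Monotone Xm)
    (hPid : ∀ (m : ℕ) (y : Xm (m + 1)), (y : X) ∈ Xm m → (P m y : X) = y) (m : ℕ) :
    Monotone (partialQQ Xm P m) := by
  refine monotone_nat_of_le_succ fun j => ⟨hmono (Nat.le_succ (m + j)), fun x y hxy => ?_⟩
  have hPy : P (m + j) y = x := by
    refine Subtype.ext ((hPid (m + j) y ?_).trans hxy.symm)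
    exact hxy ▸ x.2
  exact congrArg (QQ Xm P m j) hPy.symm

theorem stmt11_general (hmono : Monotone Xm) (hdense : Dense (⋃ m, (Xm m : Set X)))
    (hPnorm : ∀ m, ‖P m‖ = 1)
    (hPid : ∀ (m : ℕ) (y : Xm (m + 1)), (y : X) ∈ Xm m → (P m y : X) = y)
    (m : ℕ) [CompleteSpace (Xm m)] :
    ∃ Qm : X →L[ℝ] Xm m, ‖Qm‖ = 1 ∧ (∀ x ∈ Xm m, (Qm x : X) = x) ∧
      ∀ j (x : Xm (m + j)), QQ Xm P m j x = Qm x := by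
  have hdense_tail : Dense (⋃ j, (Xm (m + j) : Set X)) :=
    hdense.mono (Set.iUnion_mono fun j => hmono (Nat.le_add_left j m))
  have hbound (j : ℕ) (x : Xm (m + j)) : ‖QQ Xm P m j x‖ ≤ 1 * ‖x‖ :=
    (QQ Xm P m j).le_of_opNorm_le (norm_QQ_le_one (fun n => (hPnorm n).le) m j) x
  obtain ⟨Qm, hQm_bound, hQm⟩ := exists_clm_extension_of_directed (partialQQ Xm P m)
    (monotone_partialQQ hmono hPid m).directed_le hdense_tail hbound
  have hQm_le : ‖Qm‖ ≤ 1 := Qm.opNorm_le_bound zero_le_one hQm_bound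
  have hQm_ge : 1 ≤ ‖Qm‖ := by
    rw [← hPnorm m]
    refine (P m).opNorm_le_bound (norm_nonneg Qm) fun x => ?_
    calc ‖P m x‖ = ‖Qm x‖ := congrArg norm (hQm 1 x).symm
      _ ≤ ‖Qm‖ * ‖x‖ := Qm.le_opNorm x
  exact ⟨Qm, hQm_le.antisymm hQm_ge, fun x hx => congrArg Subtype.val (hQm 0 ⟨x, hx⟩),
    fun j x => (hQm j x).symm⟩

end InverseSystem

/-- Under the LCC setup, for each `m` there is a norm-one bounded linear map
`Q_m : X → X_m` restricting to the identity on `X_m`, such that for every `k` and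
every `x ∈ X_k`, `Q_{m,j} x = Q_m x` for all sufficiently large `j`. -/
theorem stmt11 [CompleteSpace X]
    (Xm : ℕ → Submodule ℝ X) (hmono : Monotone Xm)
    (hclosed : ∀ m, IsClosed (Xm m : Set X))
    (hdense : Dense (⋃ m, (Xm m : Set X)))
    (P : ∀ m, Xm (m + 1) →L[ℝ] Xm m)
    (hPnorm : ∀ m, ‖P m‖ = 1)
    (hPid : ∀ (m : ℕ) (y : Xm (m + 1)), (y : X) ∈ Xm m → ((P m y : Xm m) : X) = (y : X)) :
    ∀ m : ℕ, ∃ Qm : X →L[ℝ] Xm m, ‖Qm‖ = 1 ∧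
      (∀ x : X, x ∈ Xm m → ((Qm x : X) = x)) ∧
      ∀ (k : ℕ) (x : X), x ∈ Xm k → ∃ J : ℕ, ∀ j, J ≤ j →
        ∃ h : x ∈ Xm (m + j), QQ Xm P m j ⟨x, h⟩ = Qm x := by
  intro m
  have := (hclosed m).completeSpace_coe
  obtain ⟨Qm, hnorm, hid, hQQ⟩ := stmt11_general hmono hdense hPnorm hPid m
  exact ⟨Qm, hnorm, hid, fun k x hx =>
    ⟨k, fun j hj => ⟨hmono (hj.trans (Nat.le_add_left j m)) hx, hQQ j _⟩⟩⟩
end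

section
/- Let X be an infinite-dimensional real Banach space and let Y ⊆ X be a linear subspace whose norm-closure equals X. Then for every bounded linear operator L : X → X, ν(L) = sup{|f(L y)| : y ∈ Y, ‖y‖ = 1, f ∈ X*, ‖f‖ = 1, f(y) = 1}. -/
/-! A bounded operator `L` satisfies `f (L x) ≤ s` for all norming pairs `(x, f)` if and only if
`A = L - s` is dissipative, i.e. `‖x‖ ≤ ‖x - t • A x‖` for all `x` and all `t ≥ 0`. Dissipativity
is a closed condition on `x`, and at a single unit vector `x` it follows from `f (A x) ≤ 0` for
just one functional `f` norming `x`. So the bound may be tested on a dense set of unit vectors.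
Applying this to `L` and `-L` gives the bound on `|f (L x)|`. -/

open Metric NormedSpace Set

section NumericalRadius

variable {X : Type*} [NormedAddCommGroup X] [NormedSpace ℝ X]

variable (X) in
/-- Norming pairs: a unit vector and a norm-one functional taking the value `1` there. These are
the pairs over which the supremum defining the numerical radius runs. -/
def normingPairs : Set (X × (X →L[ℝ] ℝ)) :=
  {p | ‖p.1‖ = 1 ∧ ‖p.2‖ = 1 ∧ p.2 p.1 = 1}

/-- Dissipative linear operators, in the metric formulation, which involves no functionals and is
therefore stable under limits in `x`. -/
def IsDissipative (A : X →ₗ[ℝ] X) : Prop :=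
  ∀ t : ℝ, 0 ≤ t → ∀ x : X, ‖x‖ ≤ ‖x - t • A x‖

theorem exists_mem_normingPairs {x : X} (hx : ‖x‖ = 1) :
    ∃ f : X →L[ℝ] ℝ, (x, f) ∈ normingPairs X := by
  obtain ⟨f, hf, hfx⟩ := exists_dual_vector ℝ x (by simp [hx])
  exact ⟨f, hx, hf, by simpa [hx] using hfx⟩

theorem abs_apply_le_norm_of_mem_normingPairs {p : X × (X →L[ℝ] ℝ)} (hp : p ∈ normingPairs X)
    (z : X) : |p.2 z| ≤ ‖z‖ := by
  simpa using p.2.le_of_opNorm_le hp.2.1.le z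

theorem abs_apply_le_opNorm_of_mem_normingPairs {p : X × (X →L[ℝ] ℝ)}
    (hp : p ∈ normingPairs X) (L : X →L[ℝ] X) : |p.2 (L p.1)| ≤ ‖L‖ :=
  (abs_apply_le_norm_of_mem_normingPairs hp _).trans (L.unit_le_opNorm _ hp.1.le)

theorem one_le_norm_sub_smul_of_mem_normingPairs {p : X × (X →L[ℝ] ℝ)} (hp : p ∈ normingPairs X)
    {z : X} (hz : p.2 z ≤ 0) {t : ℝ} (ht : 0 ≤ t) : 1 ≤ ‖p.1 - t • z‖ :=
  calc (1 : ℝ) ≤ 1 - t * p.2 z := by linarith [mul_nonpos_of_nonneg_of_nonpos ht hz]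
    _ = p.2 (p.1 - t • z) := by simp [hp.2.2]
    _ ≤ ‖p.1 - t • z‖ := (le_abs_self _).trans (abs_apply_le_norm_of_mem_normingPairs hp _)

theorem isDissipative_of_forall_sphere {A : X →ₗ[ℝ] X}
    (hA : ∀ t : ℝ, 0 ≤ t → ∀ x ∈ sphere (0 : X) 1, 1 ≤ ‖x - t • A x‖) : IsDissipative A := by
  intro t ht x
  rcases eq_or_ne x 0 with rfl | hx
  · simp
  have hunit : normalize x ∈ sphere (0 : X) 1 :=
    mem_sphere_zero_iff_norm.2 (norm_normalize_eq_one_iff.2 hx)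
  calc ‖x‖ ≤ ‖x‖ * ‖normalize x - t • A (normalize x)‖ :=
        le_mul_of_one_le_right (norm_nonneg x) (hA t ht _ hunit)
    _ = ‖‖x‖ • (normalize x - t • A (normalize x))‖ := by rw [norm_smul, norm_norm]
    _ = ‖x - t • A x‖ := by
      rw [smul_sub, smul_comm ‖x‖ t, ← map_smul, norm_smul_normalize]

theorem isDissipative_of_dense_normingPairs {A : X →L[ℝ] X} {P : Set (X × (X →L[ℝ] ℝ))}
    (hP : P ⊆ normingPairs X) (hdense : sphere (0 : X) 1 ⊆ closure (Prod.fst '' P))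
    (hA : ∀ p ∈ P, p.2 (A p.1) ≤ 0) : IsDissipative (A : X →ₗ[ℝ] X) := by
  refine isDissipative_of_forall_sphere fun t ht x hx ↦ ?_
  have hclosed : IsClosed {x : X | 1 ≤ ‖x - t • A x‖} :=
    isClosed_le (by fun_prop) (by fun_prop)
  refine closure_minimal ?_ hclosed (hdense hx)
  rintro _ ⟨p, hp, rfl⟩
  exact one_le_norm_sub_smul_of_mem_normingPairs (hP hp) (hA p hp) ht

theorem IsDissipative.apply_le_mul_norm {A : X →ₗ[ℝ] X} (hA : IsDissipative A)
    {p : X × (X →L[ℝ] ℝ)} (hp : p ∈ normingPairs X) {t : ℝ} (ht : 0 < t) :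
    p.2 (A p.1) ≤ t * ‖A (A p.1)‖ := by
  obtain ⟨x, f⟩ := p
  have ⟨hx, _, hfx⟩ := hp
  -- Applying `1 - t • A` to `x + t • A x` cancels the terms of first order in `t`.
  have hcancel : x + t • A x - t • A (x + t • A x) = x - (t * t) • A (A x) := by
    simp only [map_add, map_smul, smul_add, smul_smul]
    abel
  have hchain : 1 + t * f (A x) ≤ 1 + t * (t * ‖A (A x)‖) :=
    calc 1 + t * f (A x) = f (x + t • A x) := by simp only [map_add, map_smul, smul_eq_mul, hfx]
      _ ≤ ‖x + t • A x‖ := (le_abs_self _).trans (abs_apply_le_norm_of_mem_normingPairs hp _)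
      _ ≤ ‖x - (t * t) • A (A x)‖ := hcancel ▸ hA t ht.le _
      _ ≤ ‖x‖ + ‖(t * t) • A (A x)‖ := norm_sub_le _ _
      _ = 1 + t * (t * ‖A (A x)‖) := by
        rw [hx, norm_smul, Real.norm_of_nonneg (mul_self_nonneg t), mul_assoc]
  exact le_of_mul_le_mul_left (le_of_add_le_add_left hchain) ht

theorem IsDissipative.apply_nonpos {A : X →ₗ[ℝ] X} (hA : IsDissipative A)
    {p : X × (X →L[ℝ] ℝ)} (hp : p ∈ normingPairs X) : p.2 (A p.1) ≤ 0 := by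
  have hcont : Continuous fun t : ℝ ↦ t * ‖A (A p.1)‖ := by fun_prop
  have hlim : Filter.Tendsto (fun t : ℝ ↦ t * ‖A (A p.1)‖) (nhdsWithin 0 (Ioi 0)) (nhds 0) :=
    (hcont.tendsto' 0 0 (zero_mul _)).mono_left nhdsWithin_le_nhds
  exact ge_of_tendsto hlim (eventually_mem_nhdsWithin.mono fun _ ht ↦ hA.apply_le_mul_norm hp ht)

theorem apply_le_of_dense_normingPairs {L : X →L[ℝ] X} {P : Set (X × (X →L[ℝ] ℝ))} {s : ℝ}
    (hP : P ⊆ normingPairs X) (hdense : sphere (0 : X) 1 ⊆ closure (Prod.fst '' P))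
    (hs : ∀ p ∈ P, p.2 (L p.1) ≤ s) {p : X × (X →L[ℝ] ℝ)} (hp : p ∈ normingPairs X) :
    p.2 (L p.1) ≤ s := by
  have hshift : ∀ q ∈ normingPairs X,
      q.2 ((L - s • ContinuousLinearMap.id ℝ X) q.1) = q.2 (L q.1) - s := by
    intro q hq
    simp [hq.2.2]
  have hdiss : IsDissipative ((L - s • ContinuousLinearMap.id ℝ X : X →L[ℝ] X) : X →ₗ[ℝ] X) :=
    isDissipative_of_dense_normingPairs hP hdense fun q hq ↦ by
      rw [hshift q (hP hq)]
      exact sub_nonpos.2 (hs q hq)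
  exact sub_nonpos.1 (hshift p hp ▸ hdiss.apply_nonpos hp)

theorem abs_apply_le_of_dense_normingPairs {L : X →L[ℝ] X} {P : Set (X × (X →L[ℝ] ℝ))} {s : ℝ}
    (hP : P ⊆ normingPairs X) (hdense : sphere (0 : X) 1 ⊆ closure (Prod.fst '' P))
    (hs : ∀ p ∈ P, |p.2 (L p.1)| ≤ s) {p : X × (X →L[ℝ] ℝ)} (hp : p ∈ normingPairs X) :
    |p.2 (L p.1)| ≤ s := by
  refine abs_le'.2 ⟨?_, ?_⟩
  · exact apply_le_of_dense_normingPairs hP hdense (fun q hq ↦ (abs_le'.1 (hs q hq)).1) hp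
  · simpa using apply_le_of_dense_normingPairs (L := -L) hP hdense
      (fun q hq ↦ by simpa using (abs_le'.1 (hs q hq)).2) hp

theorem bddAbove_abs_apply_image (L : X →L[ℝ] X) {P : Set (X × (X →L[ℝ] ℝ))}
    (hP : P ⊆ normingPairs X) : BddAbove ((fun p ↦ |p.2 (L p.1)|) '' P) :=
  ⟨‖L‖, forall_mem_image.2 fun _ hp ↦ abs_apply_le_opNorm_of_mem_normingPairs (hP hp) L⟩

theorem nu_eq_sSup_image_normingPairs (L : X →L[ℝ] X) :
    nu L = sSup ((fun p ↦ |p.2 (L p.1)|) '' normingPairs X) := by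
  simp only [nu, normingPairs, image, mem_ofPred_eq, Prod.exists, and_assoc, eq_comm]

theorem nu_eq_sSup_image_of_dense (L : X →L[ℝ] X) {P : Set (X × (X →L[ℝ] ℝ))}
    (hP : P ⊆ normingPairs X) (hdense : sphere (0 : X) 1 ⊆ closure (Prod.fst '' P)) :
    nu L = sSup ((fun p ↦ |p.2 (L p.1)|) '' P) := by
  have hnonneg : ∀ Q : Set (X × (X →L[ℝ] ℝ)), 0 ≤ sSup ((fun p ↦ |p.2 (L p.1)|) '' Q) :=
    fun Q ↦ Real.sSup_nonneg (forall_mem_image.2 fun _ _ ↦ abs_nonneg _)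
  have hle {Q : Set (X × (X →L[ℝ] ℝ))} (hQ : Q ⊆ normingPairs X) :
      ∀ p ∈ Q, |p.2 (L p.1)| ≤ sSup ((fun p ↦ |p.2 (L p.1)|) '' Q) :=
    fun p hp ↦ le_csSup (bddAbove_abs_apply_image L hQ) (mem_image_of_mem _ hp)
  rw [nu_eq_sSup_image_normingPairs]
  refine le_antisymm ?_ ?_
  · exact Real.sSup_le (forall_mem_image.2 fun p hp ↦
      abs_apply_le_of_dense_normingPairs hP hdense (hle hP) hp) (hnonneg P)
  · exact Real.sSup_le (forall_mem_image.2 fun p hp ↦ hle Subset.rfl p (hP hp)) (hnonneg _)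

theorem sphere_subset_closure_sphere_inter {Y : Submodule ℝ X} (hY : Dense (Y : Set X)) :
    sphere (0 : X) 1 ⊆ closure (sphere 0 1 ∩ Y) := by
  intro x hx
  have hx1 : ‖x‖ = 1 := mem_sphere_zero_iff_norm.1 hx
  have hx0 : x ≠ 0 := ne_zero_of_mem_unit_sphere ⟨x, hx⟩
  have hmem : x ∈ closure ({0}ᶜ ∩ (Y : Set X)) :=
    hY.open_subset_closure_inter isOpen_compl_singleton hx0
  have hcont : ContinuousAt (NormedSpace.normalize : X → X) x :=
    (continuousAt_id.norm.inv₀ (norm_ne_zero_iff.2 hx0)).smul continuousAt_id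
  have hmaps : MapsTo NormedSpace.normalize ({0}ᶜ ∩ (Y : Set X)) (sphere 0 1 ∩ Y) := by
    rintro z ⟨hz, hzY⟩
    exact ⟨mem_sphere_zero_iff_norm.2 (norm_normalize_eq_one_iff.2 hz), Y.smul_mem _ hzY⟩
  simpa only [normalize_eq_self_of_norm_eq_one hx1] using
    hcont.continuousWithinAt.mem_closure hmem hmaps

theorem stmt13_general {Y : Set X} (hY : sphere (0 : X) 1 ⊆ closure (sphere 0 1 ∩ Y))
    (L : X →L[ℝ] X) :
    nu L = sSup {r : ℝ | ∃ y : X, y ∈ Y ∧ ‖y‖ = 1 ∧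
      ∃ f : X →L[ℝ] ℝ, ‖f‖ = 1 ∧ f y = 1 ∧ r = |f (L y)|} := by
  have hfst : sphere 0 1 ∩ Y ⊆ Prod.fst '' {p ∈ normingPairs X | p.1 ∈ Y} := by
    rintro y ⟨hy, hyY⟩
    obtain ⟨f, hf⟩ := exists_mem_normingPairs (mem_sphere_zero_iff_norm.1 hy)
    exact ⟨(y, f), ⟨hf, hyY⟩, rfl⟩
  rw [nu_eq_sSup_image_of_dense L (sep_subset _ _) (hY.trans (closure_mono hfst))]
  congr 1
  ext r
  constructor
  · rintro ⟨⟨y, f⟩, ⟨⟨hy, hf, hfy⟩, hyY⟩, rfl⟩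
    exact ⟨y, hyY, hy, f, hf, hfy, rfl⟩
  · rintro ⟨y, hyY, hy, f, hf, hfy, rfl⟩
    exact ⟨(y, f), ⟨⟨hy, hf, hfy⟩, hyY⟩, rfl⟩

end NumericalRadius

/-- Let `X` be an infinite-dimensional real Banach space and `Y ⊆ X` a dense linear
subspace. Then for every bounded linear operator `L : X → X`, the numerical radius
`ν(L)` equals the sup of `|f (L y)|` over unit vectors `y ∈ Y` and norming functionals
`f` of `y`. -/
theorem stmt13 {X : Type*} [NormedAddCommGroup X] [NormedSpace ℝ X] [CompleteSpace X]
    (hinf : ¬ FiniteDimensional ℝ X)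
    (Y : Submodule ℝ X) (hY : Dense (Y : Set X))
    (L : X →L[ℝ] X) :
    nu L = sSup {r : ℝ | ∃ y : X, y ∈ Y ∧ ‖y‖ = 1 ∧
      ∃ f : X →L[ℝ] ℝ, ‖f‖ = 1 ∧ f y = 1 ∧ r = |f (L y)|} :=
  stmt13_general (sphere_subset_closure_sphere_inter hY) L
end
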